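/- The series identity ∑_{n≥1} (−1/27)^n · ((1)_n)^2 / ((1/3)_n (2/3)_n) · (7n − 2)/(n² (2n−1)) = −π²/12 holds. -/

import Mathlib

/-- The rising factorial (Pochhammer symbol) `(a)ₙ = a(a+1)⋯(a+n-1)`. -/
noncomputable def risingFactorial (a : ℝ) (n : ℕ) : ℝ :=
  ∏ i ∈ Finset.range n, (a + i)

/-!
The proof is by the Wilf–Zeilberger method. If `F (n + 1) k - F n k = G n (k + 1) - G n k` and both
`F` and `G` decay fast enough, then summing this relation over the whole quadrant leaves only the
two edges: `∑ G n 0 = ∑ F 0 k`. For the pair below, the edge `k = 0` of `G` is `-2` times the given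
series, and the edge `n = 0` of `F` is the alternating series `2 ∑ (-1)ᵏ / (k + 1)² = π² / 6`.
-/

open Filter Topology
open scoped Nat

section WZPair

/-- A Wilf–Zeilberger pair: a discrete closed 1-form on the quadrant `ℕ × ℕ`, with components `F`
in the direction of `k` and `G` in the direction of `n`. -/
def IsWZPair {E : Type*} [Sub E] (F G : ℕ → ℕ → E) : Prop :=
  ∀ n k, F (n + 1) k - F n k = G n (k + 1) - G n k

namespace IsWZPair

theorem tsum_sub_tsum_succ {E : Type*} [AddCommGroup E] [TopologicalSpace E]
    [IsTopologicalAddGroup E] [T2Space E] {F G : ℕ → ℕ → E} (h : IsWZPair F G) {n : ℕ}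
    (hF : Summable (F n)) (hF' : Summable (F (n + 1))) (hG : Tendsto (G n) atTop (𝓝 0)) :
    ∑' k, F n k - ∑' k, F (n + 1) k = G n 0 := by
  have hsum := (hF'.hasSum.sub hF.hasSum).tendsto_sum_nat
  simp only [h n, Finset.sum_range_sub] at hsum
  rw [← neg_sub, tendsto_nhds_unique hsum (hG.sub_const (G n 0)), zero_sub, neg_neg]

theorem hasSum_of_norm_le {E : Type*} [NormedAddCommGroup E] [CompleteSpace E]
    {F G : ℕ → ℕ → E} {u : ℕ → ℝ} (h : IsWZPair F G) (hu : Summable u)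
    (hF : ∀ n k, ‖F n k‖ ≤ u (n + k)) (hG : ∀ n k, ‖G n k‖ ≤ u (n + k)) :
    HasSum (fun n ↦ G n 0) (∑' k, F 0 k) := by
  have hu_add (n : ℕ) : Summable fun k ↦ u (n + k) := by
    simpa only [add_comm n] using (summable_nat_add_iff n).2 hu
  have hF_summable (n : ℕ) : Summable (F n) := .of_norm_bounded (hu_add n) (hF n)
  have hG_tendsto (n : ℕ) : Tendsto (G n) atTop (𝓝 0) :=
    squeeze_zero_norm (hG n) (hu_add n).tendsto_atTop_zero
  have hG_summable : Summable fun n ↦ G n 0 := .of_norm_bounded hu fun n ↦ hG n 0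
  have hF_tendsto : Tendsto (fun n ↦ ∑' k, F n k) atTop (𝓝 0) := by
    refine squeeze_zero_norm (fun n ↦ tsum_of_norm_bounded (hu_add n).hasSum (hF n)) ?_
    simpa only [add_comm] using tendsto_sum_nat_add u
  rw [hG_summable.hasSum_iff_tendsto_nat]
  simp only [← h.tsum_sub_tsum_succ (hF_summable _) (hF_summable _) (hG_tendsto _),
    Finset.sum_range_sub']
  simpa only [sub_zero] using hF_tendsto.const_sub (∑' k, F 0 k)

end IsWZPair

end WZPair

section RisingFactorial

theorem risingFactorial_one (n : ℕ) : risingFactorial 1 n = n ! := by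
  rw [risingFactorial, ← Finset.prod_range_add_one_eq_factorial]
  push_cast
  exact Finset.prod_congr rfl fun i _ ↦ add_comm _ _

theorem risingFactorial_succ (a : ℝ) (n : ℕ) :
    risingFactorial a (n + 1) = risingFactorial a n * (a + n) :=
  Finset.prod_range_succ _ n

theorem risingFactorial_add (a : ℝ) (m n : ℕ) :
    risingFactorial a (m + n) = risingFactorial a m * risingFactorial (a + m) n := by
  simp only [risingFactorial, Finset.prod_range_add, Nat.cast_add, add_assoc]

theorem risingFactorial_natCast_mul_mul (m : ℕ) (a : ℝ) (n : ℕ) :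
    risingFactorial (m * a) (m * n) =
      (m : ℝ) ^ (m * n) * ∏ j ∈ Finset.range m, risingFactorial (a + j / m) n := by
  induction n with
  | zero => simp [risingFactorial]
  | succ n ih =>
    have hblock : risingFactorial (m * a + (m * n : ℕ)) m =
        (m : ℝ) ^ m * ∏ j ∈ Finset.range m, (a + j / m + n) :=
      calc ∏ j ∈ Finset.range m, (m * a + (m * n : ℕ) + j)
          = ∏ j ∈ Finset.range m, m * (a + j / m + n) := by
            refine Finset.prod_congr rfl fun j hj ↦ ?_
            have hm : m ≠ 0 := Nat.ne_zero_of_lt (Finset.mem_range.1 hj)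
            push_cast
            field_simp
            ring
        _ = (m : ℝ) ^ m * ∏ j ∈ Finset.range m, (a + j / m + n) := by
            rw [Finset.prod_mul_distrib, Finset.prod_const, Finset.card_range]
    simp only [risingFactorial_succ, Finset.prod_mul_distrib]
    rw [mul_add_one, risingFactorial_add, ih, hblock, pow_add]
    ring

theorem risingFactorial_one_third_mul_two_thirds (n : ℕ) :
    risingFactorial (1 / 3) n * risingFactorial (2 / 3) n = (3 * n)! / (27 ^ n * n !) := by
  have h : risingFactorial 1 (3 * n) =
      27 ^ n * (risingFactorial (1 / 3) n * risingFactorial (2 / 3) n * risingFactorial 1 n) := by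
    convert risingFactorial_natCast_mul_mul 3 (1 / 3) n using 2 <;>
      norm_num [Finset.prod_range_succ, pow_mul]
  rw [risingFactorial_one, risingFactorial_one] at h
  rw [h]
  field_simp

end RisingFactorial

theorem hasSum_neg_one_pow_div_add_one_sq :
    HasSum (fun n : ℕ ↦ (-1 : ℝ) ^ n / (n + 1) ^ 2) (Real.pi ^ 2 / 12) := by
  -- This is the Fourier series of the Bernoulli polynomial `B₂` at `1 / 2`.
  have hB : ((Polynomial.bernoulli 2).map (algebraMap ℚ ℝ)).eval (1 / 2) = -1 / 12 := by
    norm_num [Polynomial.bernoulli, Finset.sum_range_succ]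
  have h := (hasSum_one_div_nat_pow_mul_cos one_ne_zero (x := 1 / 2) (by norm_num)).neg
  rw [← hasSum_nat_add_iff' 1] at h
  convert! h using 1
  · ext n
    rw [show 2 * Real.pi * (n + 1 : ℕ) * (1 / 2) = (n + 1 : ℕ) * Real.pi by ring,
      Real.cos_nat_mul_pi]
    push_cast
    ring
  · rw [mul_one, hB, Finset.sum_range_one]
    norm_num [Nat.factorial]
    ring

section Kernel

/-- The hypergeometric term common to both members of the Wilf–Zeilberger pair `wzF`, `wzG`. -/
noncomputable def wzKernel (n k : ℕ) : ℝ :=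
  ((2 * n)! : ℝ) ^ 2 * n ! * k ! * ((n + k)! : ℝ) ^ 2 /
    ((3 * n + k + 1)! * ((2 * n + k + 1)! : ℝ) ^ 2)

theorem wzKernel_nonneg (n k : ℕ) : 0 ≤ wzKernel n k := by
  unfold wzKernel
  positivity

theorem wzKernel_succ_right (n k : ℕ) :
    wzKernel n (k + 1) = wzKernel n k *
      ((k + 1) * (n + k + 1) ^ 2 / ((3 * n + k + 2) * (2 * n + k + 2) ^ 2)) := by
  unfold wzKernel
  simp only [← add_assoc, add_right_comm _ 1, Nat.factorial_succ]
  push_cast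
  field_simp
  ring

theorem wzKernel_succ_left (n k : ℕ) :
    wzKernel (n + 1) k = wzKernel n k *
      ((n + 1) * (n + k + 1) ^ 2 * (2 * n + 1) ^ 2 * (2 * n + 2) ^ 2 /
        ((3 * n + k + 2) * (3 * n + k + 3) * (3 * n + k + 4) *
          ((2 * n + k + 2) ^ 2 * (2 * n + k + 3) ^ 2))) := by
  unfold wzKernel
  rw [show n + 1 + k = n + k + 1 by ring, show 3 * (n + 1) + k + 1 = 3 * n + k + 4 by ring,
    show 2 * (n + 1) + k + 1 = 2 * n + k + 3 by ring, show 2 * (n + 1) = 2 * n + 2 by ring]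
  simp only [Nat.factorial_succ]
  push_cast
  field_simp
  ring

theorem factorial_mul_factorial_le (a b : ℕ) : a ! * b ! ≤ (a + b)! :=
  Nat.le_of_dvd (Nat.factorial_pos _) (Nat.factorial_mul_factorial_dvd_factorial_add a b)

theorem wzKernel_le (n k : ℕ) : wzKernel n k ≤ 1 / (2 * n + k + 1) ^ 3 := by
  have hfact : (2 * n)! ^ 2 * n ! * k ! * (n + k)! ^ 2 ≤ (3 * n + k)! * (2 * n + k)! ^ 2 :=
    calc (2 * n)! ^ 2 * n ! * k ! * (n + k)! ^ 2
        = ((2 * n)! * (n + k)!) * (((2 * n)! * k !) * (n ! * (n + k)!)) := by ring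
      _ ≤ (2 * n + (n + k))! * ((2 * n + k)! * (n + (n + k))!) := by
        gcongr <;> apply factorial_mul_factorial_le
      _ = (3 * n + k)! * (2 * n + k)! ^ 2 := by
        rw [show 2 * n + (n + k) = 3 * n + k by ring, show n + (n + k) = 2 * n + k by ring, sq]
  unfold wzKernel
  calc ((2 * n)! : ℝ) ^ 2 * n ! * k ! * ((n + k)! : ℝ) ^ 2 /
        ((3 * n + k + 1)! * ((2 * n + k + 1)! : ℝ) ^ 2)
      ≤ (3 * n + k)! * ((2 * n + k)! : ℝ) ^ 2 /
        ((3 * n + k + 1)! * ((2 * n + k + 1)! : ℝ) ^ 2) := by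
        gcongr ?_ / _
        exact_mod_cast hfact
    _ = 1 / ((3 * n + k + 1 : ℝ) * (2 * n + k + 1) ^ 2) := by
        simp only [Nat.factorial_succ]
        push_cast
        field_simp
    _ ≤ 1 / ((2 * n + k + 1 : ℝ) * (2 * n + k + 1) ^ 2) := by
        gcongr 1 / ((?_ * _ + _ + _) * _)
        norm_num
    _ = 1 / (2 * n + k + 1 : ℝ) ^ 3 := by ring

theorem abs_mul_wzKernel_le {n k : ℕ} {c : ℝ} (hc : |c| ≤ 2 * (2 * n + k + 1)) :
    |c * wzKernel n k| ≤ 2 / ((n + k : ℕ) + 1) ^ 2 := by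
  rw [abs_mul, abs_of_nonneg (wzKernel_nonneg n k)]
  calc |c| * wzKernel n k
      ≤ 2 * (2 * n + k + 1) * (1 / (2 * n + k + 1) ^ 3) := by
        gcongr
        exacts [wzKernel_nonneg n k, wzKernel_le n k]
    _ = 2 / (n + (n + k : ℕ) + 1) ^ 2 := by
        push_cast
        field_simp
        ring
    _ ≤ 2 / ((n + k : ℕ) + 1) ^ 2 := by
        gcongr
        exact le_add_of_nonneg_left n.cast_nonneg

end Kernel

section Pair

/-- The component along `k` of the Wilf–Zeilberger pair; summed along `n = 0` it gives `π² / 6`. -/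
noncomputable def wzF (n k : ℕ) : ℝ :=
  (-1) ^ (n + k) * (3 * n + 2 * k + 2) * wzKernel n k

/-- Numerator of the rational factor of `wzG`. It is determined by comparing coefficients in
the identity `IsWZPair wzF wzG`. -/
noncomputable def wzPoly (n k : ℝ) : ℝ :=
  k ^ 5 + (14 * n + 11) * k ^ 4 + (77 * n ^ 2 + 123 * n + 48) * k ^ 3
    + (204 * n ^ 3 + 498 * n ^ 2 + 397 * n + 103) * k ^ 2
    + (248 * n ^ 4 + 824 * n ^ 3 + 1009 * n ^ 2 + 538 * n + 105) * k
    + 8 * (7 * n + 5) * (2 * n + 1) * (n + 1) ^ 3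

/-- The component along `n` of the Wilf–Zeilberger pair; along `k = 0` it is `-2` times the summand
of the series to be evaluated. -/
noncomputable def wzG (n k : ℕ) : ℝ :=
  (-1) ^ (n + k) * (wzPoly n k / ((3 * n + k + 2) * (3 * n + k + 3) * (2 * n + k + 2) ^ 2)) *
    wzKernel n k

theorem isWZPair_wzF_wzG : IsWZPair wzF wzG := by
  -- Divided by `(-1) ^ (n + k) * wzKernel n k`, this is an identity of rational functions.
  intro n k
  unfold wzF wzG wzPoly
  rw [wzKernel_succ_left, wzKernel_succ_right]
  push_cast
  simp only [← add_assoc, add_right_comm _ 1, pow_succ _ (n + k)]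
  field_simp
  ring

theorem abs_wzF_le (n k : ℕ) : |wzF n k| ≤ 2 / ((n + k : ℕ) + 1) ^ 2 := by
  refine abs_mul_wzKernel_le ?_
  rw [abs_mul, abs_neg_one_pow, one_mul, abs_of_nonneg (by positivity)]
  linarith [(n.cast_nonneg : (0 : ℝ) ≤ n)]

theorem wzPoly_nonneg {n k : ℝ} (hn : 0 ≤ n) (hk : 0 ≤ k) : 0 ≤ wzPoly n k := by
  unfold wzPoly
  positivity

theorem wzPoly_le {n k : ℝ} (hn : 0 ≤ n) (hk : 0 ≤ k) :
    wzPoly n k ≤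
      2 * (2 * n + k + 1) * ((3 * n + k + 2) * (3 * n + k + 3) * (2 * n + k + 2) ^ 2) := by
  -- The difference of the two sides has nonnegative coefficients.
  rw [← sub_nonneg, wzPoly]
  ring_nf
  positivity

theorem abs_wzG_le (n k : ℕ) : |wzG n k| ≤ 2 / ((n + k : ℕ) + 1) ^ 2 := by
  have hpoly : 0 ≤ wzPoly n k := wzPoly_nonneg n.cast_nonneg k.cast_nonneg
  refine abs_mul_wzKernel_le ?_
  rw [abs_mul, abs_neg_one_pow, one_mul, abs_of_nonneg (by positivity),
    div_le_iff₀ (by positivity)]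
  exact wzPoly_le n.cast_nonneg k.cast_nonneg

theorem hasSum_wzG_zero_right : HasSum (fun n ↦ wzG n 0) (∑' k, wzF 0 k) := by
  refine isWZPair_wzF_wzG.hasSum_of_norm_le (u := fun m ↦ 2 / ((m : ℝ) + 1) ^ 2) ?_
    abs_wzF_le abs_wzG_le
  have h := (summable_nat_add_iff 1).2 (Real.summable_one_div_nat_pow.2 one_lt_two)
  simpa [div_eq_mul_inv] using h.mul_left 2

theorem wzF_zero_left (k : ℕ) : wzF 0 k = 2 * ((-1) ^ k / (k + 1) ^ 2) := by
  simp only [wzF, wzKernel, mul_zero, zero_add, Nat.factorial_zero, Nat.factorial_succ]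
  push_cast
  field_simp
  ring

theorem tsum_wzF_zero_left : ∑' k, wzF 0 k = Real.pi ^ 2 / 6 := by
  simp only [wzF_zero_left]
  rw [(hasSum_neg_one_pow_div_add_one_sq.mul_left 2).tsum_eq]
  ring

theorem summand_eq_wzG_zero_right (n : ℕ) :
    (-1 / 27 : ℝ) ^ (n + 1) * (risingFactorial 1 (n + 1)) ^ 2 /
        (risingFactorial (1 / 3) (n + 1) * risingFactorial (2 / 3) (n + 1)) *
        ((7 * ((n : ℝ) + 1) - 2) / (((n : ℝ) + 1) ^ 2 * (2 * ((n : ℝ) + 1) - 1)))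
      = -1 / 2 * wzG n 0 := by
  rw [risingFactorial_one_third_mul_two_thirds, risingFactorial_one, wzG, wzPoly, wzKernel,
    show 3 * (n + 1) = 3 * n + 3 by ring, show 2 * ((n : ℝ) + 1) - 1 = 2 * n + 1 by ring, div_pow]
  simp only [add_zero, Nat.factorial_succ, Nat.factorial_zero]
  push_cast
  field_simp
  ring

end Pair

/-- `∑_{n≥1} (−1/27)^n (1)ₙ²/((1/3)ₙ(2/3)ₙ) (7n−2)/(n²(2n−1)) = −π²/12`. -/
theorem pi2_12_series :
    ∑' n : ℕ, ((-1 / 27 : ℝ) ^ (n + 1) * (risingFactorial 1 (n + 1)) ^ 2 /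
        (risingFactorial (1 / 3) (n + 1) * risingFactorial (2 / 3) (n + 1)) *
        ((7 * ((n : ℝ) + 1) - 2) / (((n : ℝ) + 1) ^ 2 * (2 * ((n : ℝ) + 1) - 1))))
      = -Real.pi ^ 2 / 12 := by
  simp only [summand_eq_wzG_zero_right]
  rw [(hasSum_wzG_zero_right.mul_left (-1 / 2)).tsum_eq, tsum_wzF_zero_left]
  ring
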